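/- Let F be a social choice function on n voters and 3 alternatives. Then for every pair of alternatives a,b: M^{a,b}(F) ≤ 6 · Σ_{i=1}^n M_i(F), where M_i(F) is the manipulation power of voter i (the probability that a uniformly random x'_i is a profitable manipulation of F by voter i at a uniformly random profile x). -/

import Mathlib

open Finset
open scoped Classical

/-- A linear order on the three alternatives `{0,1,2}`, represented by its ranking
permutation: `σ a` is the rank of alternative `a` (rank `0` is most preferred). -/
abbrev Order3 := Equiv.Perm (Fin 3)

/-- A profile of `n` voters on three alternatives. -/
abbrev Profile (n : ℕ) := Fin n → Order3

/-- Voter with ranking `σ` prefers alternative `a` over alternative `b`. -/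
def Prefers (σ : Order3) (a b : Fin 3) : Prop := σ a < σ b

/-- The column `x^{a,b} ∈ {0,1}ⁿ` of individual preferences between `a` and `b`. -/
noncomputable def col (n : ℕ) (x : Profile n) (a b : Fin 3) : Fin n → Bool :=
  fun i => decide (Prefers (x i) a b)

/-- `M^{a,b}(F)`: the probability that `F x = a` and `F x' = b`, where `x, x'` are uniform
on profiles conditioned on agreeing in all individual preferences between `a` and `b`. -/
noncomputable def Mab (n : ℕ) (F : Profile n → Fin 3) (a b : Fin 3) : ℝ :=
  ((univ.filter (fun p : Profile n × Profile n =>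
      col n p.1 a b = col n p.2 a b ∧ F p.1 = a ∧ F p.2 = b)).card : ℝ) /
  ((univ.filter (fun p : Profile n × Profile n =>
      col n p.1 a b = col n p.2 a b)).card : ℝ)

/-- The manipulation power `M_i(F)`: the probability over a uniform profile `x` and a uniform
ballot `x'_i` that `x'_i` is a profitable manipulation for voter `i` at `x`. -/
noncomputable def Mi (n : ℕ) (F : Profile n → Fin 3) (i : Fin n) : ℝ :=
  ((univ.filter (fun p : Profile n × Order3 =>
      Prefers (p.1 i) (F (Function.update p.1 i p.2)) (F p.1))).card : ℝ) /
  (Fintype.card (Profile n × Order3) : ℝ)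

/-!
Let `c` be the third alternative. Once the column of `a`-`b` preferences is fixed, each ballot is
determined by the rank of `c`, so the profiles with a given column form a grid `{0, 1, 2}ⁿ`, on
which `M^{a,b}` is the average of `𝔼 1_{F = a} * 𝔼 1_{F = b}`. A quantitative Harris inequality
bounds this product by the expected drops of the two indicators along upward edges of the grid,
because the product of the indicators vanishes.

On an edge where an indicator drops, the winner changes from `u ∈ {a, b}` to some `v`. Moving along
the edge in one of the two directions is then a profitable manipulation: if `v ≠ c`, both ballots
compare `u` and `v` in the same way; if `v = c`, a ballot preferring `u` to `c` still does so after
`c` is demoted. Finally, a uniform ballot preserves the voter's `a`-`b` preference with probability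
`1 / 2`, which gives the constant `2`.
-/

open scoped BigOperators

section Expect

variable {ι κ α M : Type*} [Fintype ι] [Fintype κ] [Fintype α] [AddCommMonoid M] [Module ℚ≥0 M]

lemma expect_prod_type (f : ι × κ → M) : 𝔼 p, f p = 𝔼 i, 𝔼 j, f (i, j) := by
  rw [← univ_product_univ, expect_product]

lemma expect_fin_succ {n : ℕ} (f : (Fin (n + 1) → α) → M) :
    𝔼 x, f x = 𝔼 j, 𝔼 t, f (Fin.cons j t) := by
  rw [← expect_prod_type fun p => f (Fin.cons p.1 p.2)]
  exact (Fintype.expect_equiv (Fin.consEquiv fun _ => α)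
    (fun p => f (Fin.cons p.1 p.2)) f fun _ => rfl).symm

lemma expect_expect_update [DecidableEq ι] [Nonempty α] (i : ι) (f : (ι → α) → M) :
    𝔼 x, 𝔼 j, f (Function.update x i j) = 𝔼 x, f x := by
  calc 𝔼 x, 𝔼 j, f (Function.update x i j)
      = 𝔼 p : (ι → α) × α, f (Function.update p.1 i p.2) :=
        (expect_prod_type fun p => f (Function.update p.1 i p.2)).symm
    _ = 𝔼 p : (ι → α) × α, f p.1 := by
      refine expect_nbij' (fun p => (Function.update p.1 i p.2, p.1 i))
        (fun p => (Function.update p.1 i p.2, p.1 i)) ?_ ?_ ?_ ?_ ?_ <;> simp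
    _ = 𝔼 x, f x := by simp only [expect_prod_type, Fintype.expect_const]

lemma posPart_expect_le (f : ι → ℝ) : (𝔼 i, f i)⁺ ≤ 𝔼 i, (f i)⁺ :=
  max_le (expect_le_expect fun i _ => le_posPart (f i))
    (expect_nonneg fun i _ => posPart_nonneg (f i))

lemma expect_fiber_le_card_mul_expect {f : ι × κ → ℝ} (hf : ∀ p, 0 ≤ f p) (i : ι) :
    𝔼 j, f (i, j) ≤ Fintype.card ι * 𝔼 p, f p := by
  have : Nonempty ι := ⟨i⟩
  rw [expect_prod_type, Fintype.expect_eq_sum_div_card (fun i' => 𝔼 j, f (i', j)),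
    mul_div_cancel₀ _ (Nat.cast_ne_zero.2 Fintype.card_ne_zero)]
  exact single_le_sum (f := fun i' => 𝔼 j, f (i', j))
    (fun i' _ => expect_nonneg fun j _ => hf (i', j)) (mem_univ i)

lemma card_filter_div_card_eq_expect (p : ι → Prop) [DecidablePred p] :
    (#{x | p x} : ℝ) / Fintype.card ι = 𝔼 x, if p x then 1 else 0 := by
  rw [Fintype.expect_eq_sum_div_card, card_filter, Nat.cast_sum]
  simp only [Nat.cast_ite, Nat.cast_one, Nat.cast_zero]

lemma card_filter_div_card_fiber_eq_expect {X : Type*} [Fintype X] [Nonempty κ] [DecidableEq ι]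
    (e : X ≃ ι × κ) (p q : X → Prop) [DecidablePred p] [DecidablePred q] :
    (#{w : X × X | (e w.1).1 = (e w.2).1 ∧ p w.1 ∧ q w.2} : ℝ) /
        #{w : X × X | (e w.1).1 = (e w.2).1} =
      𝔼 i, (𝔼 j, if p (e.symm (i, j)) then 1 else 0) *
        𝔼 j, if q (e.symm (i, j)) then 1 else 0 := by
  have card_fiber_pairs : ∀ (p q : X → Prop) [DecidablePred p] [DecidablePred q],
      (#{w : X × X | (e w.1).1 = (e w.2).1 ∧ p w.1 ∧ q w.2} : ℝ) =
        ∑ i, (∑ j, if p (e.symm (i, j)) then 1 else 0) *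
          ∑ j, if q (e.symm (i, j)) then 1 else 0 := by
    intro p q _ _
    rw [card_filter, Nat.cast_sum, Fintype.sum_prod_type, ← e.symm.sum_comp,
      Fintype.sum_prod_type]
    refine sum_congr rfl fun i _ => ?_
    rw [sum_mul_sum]
    refine sum_congr rfl fun j _ => ?_
    rw [← e.symm.sum_comp, Fintype.sum_prod_type, Fintype.sum_eq_single i]
    · refine sum_congr rfl fun k _ => ?_
      simp [← ite_and, and_comm]
    · intro i' hi'
      simp [hi'.symm]
  have card_fiber_eq : (#{w : X × X | (e w.1).1 = (e w.2).1} : ℝ) =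
      Fintype.card ι * (Fintype.card κ * Fintype.card κ) := by
    simpa using card_fiber_pairs (fun _ => True) fun _ => True
  rw [card_fiber_pairs, card_fiber_eq]
  simp only [Fintype.expect_eq_sum_div_card, div_mul_div_comm, ← sum_div, div_div]
  congr 1
  ring

end Expect

section Harris

variable {α : Type*} [Fintype α] [LinearOrder α]

/-- The decrease of `f` along upward pairs: the average over all pairs `(j, k)` of the positive part
of `f j - f k`, where pairs with `k ≤ j` count as `0`. It vanishes iff `f` is monotone. -/
noncomputable def meanDrop (f : α → ℝ) : ℝ := 𝔼 j, 𝔼 k, if j < k then (f j - f k)⁺ else 0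

lemma meanDrop_add_meanDrop (f g : α → ℝ) : meanDrop f + meanDrop g =
    𝔼 j, 𝔼 k, if j < k then (f j - f k)⁺ + (g j - g k)⁺ else 0 := by
  simp only [meanDrop, ← expect_add_distrib, ite_add_ite, add_zero]

lemma meanDrop_expect_le {ι : Type*} [Fintype ι] (f : ι → α → ℝ) :
    meanDrop (fun j => 𝔼 t, f t j) ≤ 𝔼 t, meanDrop (f t) := by
  calc meanDrop (fun j => 𝔼 t, f t j)
      = 𝔼 j, 𝔼 k, if j < k then (𝔼 t, f t j - 𝔼 t, f t k)⁺ else 0 := rfl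
    _ ≤ 𝔼 j, 𝔼 k, 𝔼 t, if j < k then (f t j - f t k)⁺ else 0 := by
      refine expect_le_expect fun j _ => expect_le_expect fun k _ => ?_
      split_ifs
      · rw [← expect_sub_distrib]
        exact posPart_expect_le _
      · simp
    _ = 𝔼 j, 𝔼 t, 𝔼 k, if j < k then (f t j - f t k)⁺ else 0 :=
      expect_congr rfl fun j _ => expect_comm _ _ _
    _ = 𝔼 t, meanDrop (f t) := expect_comm _ _ _

lemma meanDrop_add_meanDrop_le {f g : α → ℝ} {φ : α → α → ℝ} (hφ : ∀ j k, 0 ≤ φ j k)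
    (h : ∀ j k, j < k → (f j - f k)⁺ + (g j - g k)⁺ ≤ φ j k + φ k j) :
    meanDrop f + meanDrop g ≤ 𝔼 j, 𝔼 k, φ j k := by
  calc meanDrop f + meanDrop g
      = 𝔼 j, 𝔼 k, if j < k then (f j - f k)⁺ + (g j - g k)⁺ else 0 := meanDrop_add_meanDrop f g
    _ ≤ 𝔼 j, 𝔼 k, ((if j < k then φ j k else 0) + if j < k then φ k j else 0) := by
      refine expect_le_expect fun j _ => expect_le_expect fun k _ => ?_
      split_ifs with hjk
      · exact h j k hjk
      · simp
    _ = 𝔼 j, 𝔼 k, ((if j < k then φ j k else 0) + if k < j then φ j k else 0) := by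
      simp only [expect_add_distrib]
      rw [expect_comm univ univ fun j k => if j < k then φ k j else 0]
    _ ≤ 𝔼 j, 𝔼 k, φ j k := by
      refine expect_le_expect fun j _ => expect_le_expect fun k _ => ?_
      have := hφ j k
      rcases lt_trichotomy j k with hjk | rfl | hjk
      · simp [hjk, hjk.not_gt]
      · simpa
      · simp [hjk, hjk.not_gt]

lemma neg_mul_le_posPart_add_posPart {u v : ℝ} (hu : -1 ≤ u) (hv : -1 ≤ v) :
    -(u * v) ≤ u⁺ + v⁺ := by
  rcases le_total 0 u with hu0 | hu0 <;> rcases le_total 0 v with hv0 | hv0 <;>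
    simp only [posPart_of_nonneg, posPart_of_nonpos, hu0, hv0] <;> nlinarith

lemma expect_mul_expect_le_add_meanDrop [Nonempty α] {f g : α → ℝ}
    (hf : ∀ j k, f j - f k ≤ 1) (hg : ∀ j k, g j - g k ≤ 1) :
    (𝔼 j, f j) * 𝔼 j, g j ≤ 𝔼 j, f j * g j + (meanDrop f + meanDrop g) := by
  let d : α → α → ℝ := fun j k => if j < k then (f j - f k)⁺ + (g j - g k)⁺ else 0
  have hd : ∀ j k, f j * g k + f k * g j ≤ f j * g j + f k * g k + (d j k + d k j) := by
    intro j k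
    wlog hjk : j ≤ k generalizing j k
    · linarith [this k j (le_of_not_ge hjk)]
    rcases hjk.eq_or_lt with rfl | hjk
    · simp [d]
    have := neg_mul_le_posPart_add_posPart (u := f j - f k) (v := g j - g k)
      (by linarith [hf k j]) (by linarith [hg k j])
    simp only [d, hjk, hjk.not_gt, if_true, if_false]
    linarith
  have havg := expect_le_expect fun j (_ : j ∈ univ) =>
    expect_le_expect fun k (_ : k ∈ univ) => hd j k
  simp only [expect_add_distrib, Fintype.expect_const, ← mul_expect, ← expect_mul] at havg
  rw [expect_comm univ univ fun j k => d k j] at havg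
  rw [meanDrop_add_meanDrop]
  change _ ≤ _ + 𝔼 j, 𝔼 k, d j k
  linarith

/-- The negative influence of coordinate `i` on `f`: the mean drop of `f` along a random line in
direction `i`. It is a one-sided `L¹` influence and measures how far `f` is from being monotone in
coordinate `i`. -/
noncomputable def negInfluence {n : ℕ} (f : (Fin n → α) → ℝ) (i : Fin n) : ℝ :=
  𝔼 x, meanDrop fun j => f (Function.update x i j)

variable {n : ℕ}

lemma negInfluence_zero [Nonempty α] (f : (Fin (n + 1) → α) → ℝ) :
    negInfluence f 0 = 𝔼 t, meanDrop fun j => f (Fin.cons j t) := by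
  simp only [negInfluence, expect_fin_succ, Fin.update_cons_zero, Fintype.expect_const]

lemma negInfluence_succ (f : (Fin (n + 1) → α) → ℝ) (i : Fin n) :
    negInfluence f i.succ = 𝔼 j, negInfluence (fun t => f (Fin.cons j t)) i := by
  simp only [negInfluence, expect_fin_succ, Fin.cons_update]

/-- For monotone `f` and `g` the error term vanishes and this is Harris' inequality. -/
theorem expect_mul_expect_le_add_sum_negInfluence [Nonempty α] {f g : (Fin n → α) → ℝ}
    (hf : ∀ x y, f x - f y ≤ 1) (hg : ∀ x y, g x - g y ≤ 1) :
    (𝔼 x, f x) * 𝔼 x, g x ≤ 𝔼 x, f x * g x + ∑ i, (negInfluence f i + negInfluence g i) := by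
  induction n with
  | zero => simp
  | succ n ih =>
    have average_sub_le : ∀ h : (Fin (n + 1) → α) → ℝ, (∀ x y, h x - h y ≤ 1) → ∀ j k,
        𝔼 t, h (Fin.cons j t) - 𝔼 t, h (Fin.cons k t) ≤ 1 := fun h hh j k => by
      rw [← expect_sub_distrib]
      exact expect_le univ_nonempty fun t _ => hh _ _
    have first := expect_mul_expect_le_add_meanDrop (average_sub_le f hf) (average_sub_le g hg)
    have rest : ∀ j, (𝔼 t, f (Fin.cons j t)) * 𝔼 t, g (Fin.cons j t) ≤ _ := fun j =>
      ih (fun x y => hf (Fin.cons j x) (Fin.cons j y)) fun x y => hg (Fin.cons j x) (Fin.cons j y)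
    have average_rest := expect_le_expect fun j (_ : j ∈ univ) => rest j
    have drop_f := meanDrop_expect_le fun t j => f (Fin.cons j t)
    have drop_g := meanDrop_expect_le fun t j => g (Fin.cons j t)
    simp only [expect_add_distrib, expect_sum_comm] at average_rest
    simp only [expect_fin_succ, Fin.sum_univ_succ, negInfluence_zero, negInfluence_succ]
    linarith

end Harris

section Rankings

-- `decide` cannot evaluate the classical instance supplied by `open scoped Classical`.
instance (σ : Order3) (a b : Fin 3) : Decidable (Prefers σ a b) :=
  inferInstanceAs (Decidable (σ a < σ b))

/-- The alternative other than two distinct `a` and `b`. The formula works because the three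
elements of `Fin 3` sum to `0`. -/
def thirdAlt (a b : Fin 3) : Fin 3 := -(a + b)

lemma ne_thirdAlt_iff : ∀ {a b u : Fin 3}, a ≠ b → (u ≠ thirdAlt a b ↔ u = a ∨ u = b) := by
  decide

lemma bijective_prefers_thirdAlt : ∀ {a b : Fin 3}, a ≠ b →
    Function.Bijective fun σ : Order3 => (decide (Prefers σ a b), σ (thirdAlt a b)) := by
  decide

-- The rank of `c` counts the alternatives above it, so with the order of `a` and `b` fixed,
-- demoting `c` only enlarges the set of alternatives above it.
lemma prefers_thirdAlt_of_lt : ∀ {a b : Fin 3}, a ≠ b → ∀ {σ τ : Order3},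
    (Prefers σ a b ↔ Prefers τ a b) → σ (thirdAlt a b) < τ (thirdAlt a b) →
    ∀ {u : Fin 3}, Prefers σ u (thirdAlt a b) → Prefers τ u (thirdAlt a b) := by
  decide

variable {a b : Fin 3}

/-- Coordinates on rankings adapted to the pair `a, b`: whether `a` is above `b`, and the rank of
the third alternative. -/
noncomputable def rankingEquiv (hab : a ≠ b) : Order3 ≃ Bool × Fin 3 :=
  .ofBijective _ (bijective_prefers_thirdAlt hab)

lemma prefers_rankingEquiv_symm_iff (hab : a ≠ b) (z : Bool) (k : Fin 3) :
    Prefers ((rankingEquiv hab).symm (z, k)) a b ↔ z = true := by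
  rw [← decide_eq_true_iff (p := Prefers _ a b)]
  exact Eq.congr_left (congrArg Prod.fst ((rankingEquiv hab).apply_symm_apply (z, k)))

lemma rankingEquiv_symm_thirdAlt (hab : a ≠ b) (z : Bool) (k : Fin 3) :
    (rankingEquiv hab).symm (z, k) (thirdAlt a b) = k :=
  congrArg Prod.snd ((rankingEquiv hab).apply_symm_apply (z, k))

lemma prefers_or_prefers {σ : Order3} {u v : Fin 3} (h : u ≠ v) : Prefers σ u v ∨ Prefers σ v u :=
  (σ.injective.ne h).lt_or_gt

lemma prefers_swap_iff (hab : a ≠ b) {σ τ : Order3} (hστ : Prefers σ a b ↔ Prefers τ a b) :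
    Prefers σ b a ↔ Prefers τ b a := by
  have := σ.injective.ne hab
  have := τ.injective.ne hab
  unfold Prefers at *
  omega

lemma prefers_or_prefers_of_thirdAlt_lt (hab : a ≠ b) {σ τ : Order3}
    (hστ : Prefers σ a b ↔ Prefers τ a b) (hc : σ (thirdAlt a b) < τ (thirdAlt a b))
    {u v : Fin 3} (hu : u ≠ thirdAlt a b) (huv : u ≠ v) : Prefers σ v u ∨ Prefers τ u v := by
  refine (prefers_or_prefers huv).symm.imp_right fun hσ => ?_
  by_cases hv : v = thirdAlt a b
  · subst hv
    exact prefers_thirdAlt_of_lt hab hστ hc hσ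
  · rcases (ne_thirdAlt_iff hab).1 hu with rfl | rfl <;>
      rcases (ne_thirdAlt_iff hab).1 hv with rfl | rfl
    · exact absurd rfl huv
    · exact hστ.1 hσ
    · exact (prefers_swap_iff hab hστ).1 hσ
    · exact absurd rfl huv

end Rankings

section Voting

variable {n : ℕ} {a b : Fin 3}

/-- The coordinates `rankingEquiv` applied to every voter, splitting a profile into its `a`-`b`
column and a point of the grid of ranks of the third alternative. -/
noncomputable def profileEquiv (n : ℕ) (hab : a ≠ b) :
    Profile n ≃ (Fin n → Bool) × (Fin n → Fin 3) :=
  (Equiv.piCongrRight fun _ => rankingEquiv hab).trans (Equiv.arrowProdEquivProdArrow _ _ _)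

lemma profileEquiv_apply_fst (hab : a ≠ b) (x : Profile n) :
    (profileEquiv n hab x).1 = col n x a b :=
  funext fun _ => decide_eq_decide.2 Iff.rfl

lemma profileEquiv_symm_apply (hab : a ≠ b) (z : Fin n → Bool) (t : Fin n → Fin 3) (i : Fin n) :
    (profileEquiv n hab).symm (z, t) i = (rankingEquiv hab).symm (z i, t i) :=
  rfl

lemma update_profileEquiv_symm (hab : a ≠ b) (z : Fin n → Bool) (t : Fin n → Fin 3) (i : Fin n)
    (k : Fin 3) :
    Function.update ((profileEquiv n hab).symm (z, t)) i ((rankingEquiv hab).symm (z i, k)) =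
      (profileEquiv n hab).symm (z, Function.update t i k) := by
  funext j
  rcases eq_or_ne j i with rfl | hj
  · simp [profileEquiv]
  · simp [profileEquiv, hj]

/-- The real-valued indicator of the profiles at which `a` wins. -/
noncomputable def winIndicator (F : Profile n → Fin 3) (a : Fin 3) (x : Profile n) : ℝ :=
  if F x = a then 1 else 0

/-- The real-valued indicator that the ballot `σ` is a profitable manipulation of `F` by voter `i`
at the profile `x`. -/
noncomputable def manipIndicator (F : Profile n → Fin 3) (i : Fin n) (x : Profile n)
    (σ : Order3) : ℝ :=
  if Prefers (x i) (F (Function.update x i σ)) (F x) then 1 else 0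

lemma manipIndicator_nonneg (F : Profile n → Fin 3) (i : Fin n) (x : Profile n) (σ : Order3) :
    0 ≤ manipIndicator F i x σ := by
  unfold manipIndicator
  positivity

lemma winIndicator_nonneg (F : Profile n → Fin 3) (a : Fin 3) (x : Profile n) :
    0 ≤ winIndicator F a x := by
  unfold winIndicator
  positivity

lemma winIndicator_sub_le_one (F : Profile n → Fin 3) (a : Fin 3) (x y : Profile n) :
    winIndicator F a x - winIndicator F a y ≤ 1 := by
  unfold winIndicator
  split_ifs <;> norm_num

lemma posPart_winIndicator_sub_le (F : Profile n → Fin 3) (a : Fin 3) (x y : Profile n) :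
    (winIndicator F a x - winIndicator F a y)⁺ ≤ winIndicator F a x :=
  max_le (sub_le_self _ (winIndicator_nonneg F a y)) (winIndicator_nonneg F a x)

lemma winIndicator_add_winIndicator (hab : a ≠ b) (F : Profile n → Fin 3) (x : Profile n) :
    winIndicator F a x + winIndicator F b x = if F x ≠ thirdAlt a b then 1 else 0 := by
  unfold winIndicator
  simp only [ne_thirdAlt_iff hab]
  rcases eq_or_ne (F x) a with ha | ha <;> simp [ha, hab]

lemma winIndicator_mul_winIndicator (hab : a ≠ b) (F : Profile n → Fin 3) (x : Profile n) :
    winIndicator F a x * winIndicator F b x = 0 := by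
  unfold winIndicator
  rcases eq_or_ne (F x) a with ha | ha <;> simp [ha, hab]

lemma Mi_eq_expect (F : Profile n → Fin 3) (i : Fin n) :
    Mi n F i = 𝔼 x, 𝔼 σ, manipIndicator F i x σ := by
  simp only [Mi, manipIndicator, card_filter_div_card_eq_expect, expect_prod_type]
  congr!

lemma Mi_nonneg (F : Profile n → Fin 3) (i : Fin n) : 0 ≤ Mi n F i := by
  unfold Mi
  positivity

lemma Mab_eq_expect (hab : a ≠ b) (F : Profile n → Fin 3) :
    Mab n F a b = 𝔼 z, (𝔼 t, winIndicator F a ((profileEquiv n hab).symm (z, t))) *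
      𝔼 t, winIndicator F b ((profileEquiv n hab).symm (z, t)) := by
  simp only [Mab, winIndicator, ← profileEquiv_apply_fst hab]
  convert card_filter_div_card_fiber_eq_expect (profileEquiv n hab) (F · = a) (F · = b)

lemma posPart_winIndicator_sub_add_le (hab : a ≠ b) (F : Profile n → Fin 3) {i : Fin n}
    {x : Profile n} {σ : Order3} (hσ : Prefers (x i) a b ↔ Prefers σ a b)
    (hc : x i (thirdAlt a b) < σ (thirdAlt a b)) :
    (winIndicator F a x - winIndicator F a (Function.update x i σ))⁺ +
        (winIndicator F b x - winIndicator F b (Function.update x i σ))⁺ ≤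
      manipIndicator F i x σ + manipIndicator F i (Function.update x i σ) (x i) := by
  set y := Function.update x i σ with hy
  have manip_there := manipIndicator_nonneg F i x σ
  have manip_back := manipIndicator_nonneg F i y (x i)
  by_cases hxy : F x = F y
  · simpa [winIndicator, hxy] using add_nonneg manip_there manip_back
  calc (winIndicator F a x - winIndicator F a y)⁺ + (winIndicator F b x - winIndicator F b y)⁺
      ≤ winIndicator F a x + winIndicator F b x :=
        add_le_add (posPart_winIndicator_sub_le F a x y) (posPart_winIndicator_sub_le F b x y)
    _ = if F x ≠ thirdAlt a b then 1 else 0 := winIndicator_add_winIndicator hab F x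
    _ ≤ manipIndicator F i x σ + manipIndicator F i y (x i) := by
      split_ifs with hx
      · rcases prefers_or_prefers_of_thirdAlt_lt hab hσ hc hx hxy with gain | gain
        · have : manipIndicator F i x σ = 1 := if_pos gain
          linarith
        · have : manipIndicator F i y (x i) = 1 := if_pos (by simpa [hy] using gain)
          linarith
      · exact add_nonneg manip_there manip_back

lemma negInfluence_winIndicator_add_le (hab : a ≠ b) (F : Profile n → Fin 3)
    (z : Fin n → Bool) (i : Fin n) :
    negInfluence (fun t => winIndicator F a ((profileEquiv n hab).symm (z, t))) i +
        negInfluence (fun t => winIndicator F b ((profileEquiv n hab).symm (z, t))) i ≤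
      𝔼 t, 𝔼 k, manipIndicator F i ((profileEquiv n hab).symm (z, t))
        ((rankingEquiv hab).symm (z i, k)) := by
  let φ : (Fin n → Fin 3) → Fin 3 → ℝ := fun t k =>
    manipIndicator F i ((profileEquiv n hab).symm (z, t)) ((rankingEquiv hab).symm (z i, k))
  calc _ ≤ 𝔼 t, 𝔼 j, 𝔼 k, φ (Function.update t i j) k := by
        rw [negInfluence, negInfluence, ← expect_add_distrib]
        refine expect_le_expect fun t _ => meanDrop_add_meanDrop_le
          (fun j k => manipIndicator_nonneg _ _ _ _) fun j k hjk => ?_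
        set x := (profileEquiv n hab).symm (z, Function.update t i j) with hx
        have hxi : x i = (rankingEquiv hab).symm (z i, j) := by simp [hx, profileEquiv_symm_apply]
        have hupd : (profileEquiv n hab).symm (z, Function.update t i k) =
            Function.update x i ((rankingEquiv hab).symm (z i, k)) := by
          rw [hx, update_profileEquiv_symm, Function.update_idem]
        have hσ : Prefers (x i) a b ↔ Prefers ((rankingEquiv hab).symm (z i, k)) a b := by
          rw [hxi, prefers_rankingEquiv_symm_iff, prefers_rankingEquiv_symm_iff]
        have hc : x i (thirdAlt a b) < (rankingEquiv hab).symm (z i, k) (thirdAlt a b) := by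
          rwa [hxi, rankingEquiv_symm_thirdAlt, rankingEquiv_symm_thirdAlt]
        simpa only [φ, hupd, hxi] using posPart_winIndicator_sub_add_le hab F hσ hc
    _ = 𝔼 t, 𝔼 k, φ t k := expect_expect_update i fun t => 𝔼 k, φ t k

lemma expect_winIndicator_mul_expect_winIndicator_le (hab : a ≠ b) (F : Profile n → Fin 3)
    (z : Fin n → Bool) :
    (𝔼 t, winIndicator F a ((profileEquiv n hab).symm (z, t))) *
        𝔼 t, winIndicator F b ((profileEquiv n hab).symm (z, t)) ≤
      ∑ i, 𝔼 t, 𝔼 k, manipIndicator F i ((profileEquiv n hab).symm (z, t))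
        ((rankingEquiv hab).symm (z i, k)) := by
  refine (expect_mul_expect_le_add_sum_negInfluence (fun _ _ => winIndicator_sub_le_one F a _ _)
    fun _ _ => winIndicator_sub_le_one F b _ _).trans ?_
  simp only [winIndicator_mul_winIndicator hab, Fintype.expect_const, zero_add]
  exact sum_le_sum fun i _ => negInfluence_winIndicator_add_le hab F z i

lemma expect_manipIndicator_le_two_mul_Mi (hab : a ≠ b) (F : Profile n → Fin 3) (i : Fin n) :
    𝔼 z, 𝔼 t, 𝔼 k, manipIndicator F i ((profileEquiv n hab).symm (z, t))
      ((rankingEquiv hab).symm (z i, k)) ≤ 2 * Mi n F i := by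
  have ballot_le : ∀ x z, 𝔼 k, manipIndicator F i x ((rankingEquiv hab).symm (z, k)) ≤
      2 * 𝔼 σ, manipIndicator F i x σ := by
    intro x z
    rw [← Fintype.expect_equiv (rankingEquiv hab).symm _ _ fun _ => rfl]
    exact expect_fiber_le_card_mul_expect (fun _ => manipIndicator_nonneg F i x _) z
  calc _ ≤ 𝔼 z, 𝔼 t, 2 * 𝔼 σ, manipIndicator F i ((profileEquiv n hab).symm (z, t)) σ :=
        expect_le_expect fun z _ => expect_le_expect fun t _ => ballot_le _ (z i)
    _ = 𝔼 x, 2 * 𝔼 σ, manipIndicator F i x σ := by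
        rw [← Fintype.expect_equiv (profileEquiv n hab).symm _ _ fun _ => rfl, expect_prod_type]
    _ = 2 * Mi n F i := by rw [Mi_eq_expect, mul_expect]

end Voting

theorem stmt7_general (n : ℕ) (F : Profile n → Fin 3) (a b : Fin 3) (hab : a ≠ b) :
    Mab n F a b ≤ 2 * ∑ i : Fin n, Mi n F i := by
  rw [Mab_eq_expect hab]
  calc _ ≤ 𝔼 z : Fin n → Bool, ∑ i, 𝔼 t, 𝔼 k, manipIndicator F i
          ((profileEquiv n hab).symm (z, t)) ((rankingEquiv hab).symm (z i, k)) :=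
        expect_le_expect fun z _ => expect_winIndicator_mul_expect_winIndicator_le hab F z
    _ = ∑ i, 𝔼 z : Fin n → Bool, 𝔼 t, 𝔼 k, manipIndicator F i
          ((profileEquiv n hab).symm (z, t)) ((rankingEquiv hab).symm (z i, k)) :=
        expect_sum_comm _ _ _
    _ ≤ ∑ i, 2 * Mi n F i :=
        sum_le_sum fun i _ => expect_manipIndicator_le_two_mul_Mi hab F i
    _ = 2 * ∑ i, Mi n F i := (mul_sum _ _ _).symm

/-- For any SCF on three alternatives and any pair of alternatives,
`M^{a,b}(F) ≤ 6 · Σᵢ Mᵢ(F)`. -/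
theorem stmt7 (n : ℕ) (F : Profile n → Fin 3) (a b : Fin 3) (hab : a ≠ b) :
    Mab n F a b ≤ 6 * ∑ i : Fin n, Mi n F i := by
  linarith [stmt7_general n F a b hab, sum_nonneg fun i (_ : i ∈ univ) => Mi_nonneg F i]
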